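/- arXiv:1903.10646 — 7 statements merged into one kernel-verified Lean document; each statement's English description precedes it below -/
import Mathlib

section
/- Suppose τ, σ > 0 and (x̂, ŷ) = PD_{τ,σ}(x̄, ȳ, x̃, ỹ) for given points x̄, x̃ ∈ 𝕏 and ȳ, ỹ ∈ 𝕐. Then for every (x, y) ∈ 𝕏 × 𝕐 one has L(x̂, y) − L(x, ŷ) ≤ (1/τ)(D_𝕏(x, x̄) − D_𝕏(x, x̂) − D_𝕏(x̂, x̄)) + (L_f/2)‖x̂ − x̄‖² + (1/σ)(D_𝕐(y, ȳ) − D_𝕐(y, ŷ) − D_𝕐(ŷ, ȳ)) + ⟨K(x − x̂), ỹ − ŷ⟩ − ⟨K(x̃ − x̂), y − ŷ⟩. -/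
/-!
Minimality of `b` for a convex function plus a differentiable one gives a first-order variational
inequality, obtained by minimizing over the epigraph of the convex part, where the objective is
differentiable. For the proximal term `D(·, a)` the derivative at `b` is `∇ψ b - ∇ψ a`, which the
three-point identity turns into a difference of Bregman divergences. The linear coupling terms of a
primal-dual step are absorbed into the convex part. In the primal step, the linearization of `f` is
removed by the gradient inequality at the competitor and the descent lemma at the new iterate. When
the primal and dual inequalities are added, only the bilinear coupling terms remain.
-/

open Set

section FirstOrder

variable {E : Type*} [NormedAddCommGroup E] [NormedSpace ℝ E]

theorem convexOn_le_add_fderiv_of_isMinOn_add {C : Set E} {p φ : E → ℝ} {φ' : E →L[ℝ] ℝ} {a x : E}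
    (hp : ConvexOn ℝ C p) (hφ : HasFDerivWithinAt φ φ' C a)
    (hmin : IsMinOn (fun u => p u + φ u) C a) (ha : a ∈ C) (hx : x ∈ C) :
    p a ≤ p x + φ' (x - a) := by
  let epi : Set (E × ℝ) := {q | q.1 ∈ C ∧ p q.1 ≤ q.2}
  have hmin_epi : IsMinOn (fun q : E × ℝ => q.2 + φ q.1) epi (a, p a) := fun q hq =>
    (hmin hq.1).trans (add_le_add_left hq.2 _)
  have hderiv : HasFDerivWithinAt (fun q : E × ℝ => q.2 + φ q.1)
      (ContinuousLinearMap.snd ℝ E ℝ + φ'.comp (ContinuousLinearMap.fst ℝ E ℝ)) epi (a, p a) :=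
    hasFDerivWithinAt_snd.add
      (hφ.comp (a, p a) hasFDerivWithinAt_fst fun _ hq => hq.1)
  have hdir : (x, p x) - (a, p a) ∈ posTangentConeAt epi (a, p a) :=
    sub_mem_posTangentConeAt_of_segment_subset <|
      hp.convex_epigraph.segment_subset ⟨ha, le_rfl⟩ ⟨hx, le_rfl⟩
  have hnonneg : 0 ≤ p x - p a + φ' (x - a) :=
    hmin_epi.localize.hasFDerivWithinAt_nonneg hderiv hdir
  linarith

theorem convexOn_add_fderiv_le {s : Set E} {f : E → ℝ} {f' : E →L[ℝ] ℝ} {a x : E}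
    (hf : ConvexOn ℝ s f) (hf' : HasFDerivWithinAt f f' s a) (ha : a ∈ s) (hx : x ∈ s) :
    f a + f' (x - a) ≤ f x := by
  have hmin : IsMinOn (fun u => f u + -f u) s a := fun u _ => by simp
  have := convexOn_le_add_fderiv_of_isMinOn_add hf hf'.neg hmin ha hx
  rw [neg_apply] at this
  linarith

theorem norm_sub_fderiv_le_of_norm_fderiv_sub_le
    {F : Type*} [NormedAddCommGroup F] [NormedSpace ℝ F]
    {s : Set E} (hs : Convex ℝ s) {f : E → F} {f' : E → E →L[ℝ] F} {a b : E} {l : ℝ}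
    (hf : ∀ u ∈ s, HasFDerivWithinAt f (f' u) s u)
    (hlip : ∀ u ∈ s, ‖f' u - f' a‖ ≤ l * ‖u - a‖) (ha : a ∈ s) (hb : b ∈ s) :
    ‖f b - f a - f' a (b - a)‖ ≤ l / 2 * ‖b - a‖ ^ 2 := by
  let γ : ℝ → E := AffineMap.lineMap a b
  have hγ_mem : MapsTo γ (Icc 0 1) s := fun _ ht => hs.lineMap_mem ha hb ht
  have hremainder : ∀ t ∈ Icc (0 : ℝ) 1, HasDerivWithinAt
      (fun t => f (γ t) - f a - t • f' a (b - a)) ((f' (γ t) - f' a) (b - a)) (Icc 0 1) t := by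
    intro t ht
    have hcomp := (hf (γ t) (hγ_mem ht)).comp_hasDerivWithinAt t
      AffineMap.hasDerivWithinAt_lineMap hγ_mem
    simpa only [one_smul] using! (hcomp.sub_const (f a)).sub
      ((hasDerivWithinAt_id t _).smul_const (f' a (b - a)))
  have hquad (t : ℝ) : HasDerivAt (fun t => l / 2 * ‖b - a‖ ^ 2 * t ^ 2) (l * ‖b - a‖ ^ 2 * t) t :=
    ((hasDerivAt_pow 2 t).const_mul (l / 2 * ‖b - a‖ ^ 2)).congr_deriv (by norm_num; ring)
  have hbound : ∀ t ∈ Ico (0 : ℝ) 1, ‖(f' (γ t) - f' a) (b - a)‖ ≤ l * ‖b - a‖ ^ 2 * t := by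
    intro t ht
    calc ‖(f' (γ t) - f' a) (b - a)‖ ≤ ‖f' (γ t) - f' a‖ * ‖b - a‖ :=
          (f' (γ t) - f' a).le_opNorm _
      _ ≤ l * ‖γ t - a‖ * ‖b - a‖ := by
          gcongr
          exact hlip _ (hγ_mem (Ico_subset_Icc_self ht))
      _ = l * ‖b - a‖ ^ 2 * t := by
          rw [← dist_eq_norm (γ t), dist_lineMap_left, Real.norm_of_nonneg ht.1, dist_eq_norm']
          ring
  simpa [γ] using image_norm_le_of_norm_deriv_right_le_deriv_boundary
    (fun t ht => (hremainder t ht).continuousWithinAt)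
    (fun t ht => (hremainder t (Ico_subset_Icc_self ht)).mono_of_mem_nhdsWithin
      (Icc_mem_nhdsGE_of_mem ht))
    (by simp [γ]) hquad hbound (right_mem_Icc.2 zero_le_one)

end FirstOrder

section Bregman

variable {E : Type*} [NormedAddCommGroup E] [NormedSpace ℝ E]

/-- The Bregman divergence `D(x, a)` of `ψ`. The derivative `ψ'` is a separate argument, so that
`ψ` need only be differentiable where a lemma asks for it. -/
def bregmanDiv (ψ : E → ℝ) (ψ' : E → E →L[ℝ] ℝ) (x a : E) : ℝ :=
  ψ x - ψ a - ψ' a (x - a)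

theorem bregmanDiv_three_point (ψ : E → ℝ) (ψ' : E → E →L[ℝ] ℝ) (x a b : E) :
    bregmanDiv ψ ψ' x a - bregmanDiv ψ ψ' x b - bregmanDiv ψ ψ' b a = (ψ' b - ψ' a) (x - b) := by
  simp only [bregmanDiv, map_sub, sub_apply]
  ring

theorem hasFDerivWithinAt_bregmanDiv {C : Set E} {ψ : E → ℝ} {ψ' : E → E →L[ℝ] ℝ} {b : E}
    (hψ : HasFDerivWithinAt ψ (ψ' b) C b) (a : E) :
    HasFDerivWithinAt (fun u => bregmanDiv ψ ψ' u a) (ψ' b - ψ' a) C b :=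
  (hψ.sub_const _).sub
    ((ψ' a).hasFDerivWithinAt.comp b ((hasFDerivWithinAt_id b C).sub_const a) (mapsTo_univ _ _))

theorem le_add_bregmanDiv_of_isMinOn {C : Set E} {p ψ : E → ℝ} {ψ' : E → E →L[ℝ] ℝ} {α : ℝ}
    {a b x : E} (hp : ConvexOn ℝ C p) (hψ : HasFDerivWithinAt ψ (ψ' b) C b)
    (hmin : IsMinOn (fun u => p u + α * bregmanDiv ψ ψ' u a) C b) (hb : b ∈ C) (hx : x ∈ C) :
    p b ≤ p x + α * (bregmanDiv ψ ψ' x a - bregmanDiv ψ ψ' x b - bregmanDiv ψ ψ' b a) := by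
  rw [bregmanDiv_three_point]
  exact convexOn_le_add_fderiv_of_isMinOn_add hp
    ((hasFDerivWithinAt_bregmanDiv hψ a).const_mul α) hmin hb hx

theorem add_le_add_bregmanDiv_of_isMinOn_linearized {s C : Set E} {f p ψ : E → ℝ}
    {f' ψ' : E → E →L[ℝ] ℝ} {α l : ℝ} {a b x : E}
    (hf : ConvexOn ℝ s f) (hf' : ∀ u ∈ s, HasFDerivWithinAt f (f' u) s u)
    (hlip : ∀ u ∈ s, ‖f' u - f' a‖ ≤ l * ‖u - a‖) (hCs : C ⊆ s) (ha : a ∈ s)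
    (hp : ConvexOn ℝ C p) (hψ : HasFDerivWithinAt ψ (ψ' b) C b)
    (hmin : IsMinOn (fun u => f a + f' a (u - a) + p u + α * bregmanDiv ψ ψ' u a) C b)
    (hb : b ∈ C) (hx : x ∈ C) :
    f b + p b ≤ f x + p x +
      α * (bregmanDiv ψ ψ' x a - bregmanDiv ψ ψ' x b - bregmanDiv ψ ψ' b a) +
      l / 2 * ‖b - a‖ ^ 2 := by
  have hmodel : ConvexOn ℝ C (fun u => f a + f' a (u - a) + p u) := by
    have hlinear := ((f' a).toLinearMap.convexOn hp.1).add_const (f a - f' a a)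
    refine (hlinear.add hp).congr fun u _ => ?_
    simp only [Pi.add_apply, ContinuousLinearMap.coe_coe, map_sub]
    ring
  have hprox := le_add_bregmanDiv_of_isMinOn hmodel hψ hmin hb hx
  have hgradient := convexOn_add_fderiv_le hf (hf' a ha) ha (hCs hx)
  have hdescent := (Real.le_norm_self _).trans
    (norm_sub_fderiv_le_of_norm_fderiv_sub_le hf.1 hf' hlip ha (hCs hb))
  linarith

end Bregman

/-- The saddle function `⟨Kx, y⟩ + f x + g x - h* y`. As `g` and `h*` are encoded by real-valued
functions, it is meaningful only for `x` in the domain of `g` and `y` in that of `h*`. -/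
def saddleFunction {X Y : Type*} [AddCommGroup X] [Module ℝ X] [AddCommGroup Y] [Module ℝ Y]
    (K : X →ₗ[ℝ] Y →ₗ[ℝ] ℝ) (f g : X → ℝ) (hstar : Y → ℝ) (x : X) (y : Y) : ℝ :=
  K x y + f x + g x - hstar y

theorem stmt_0_general
    {X Y : Type*} [NormedAddCommGroup X] [NormedSpace ℝ X]
    [NormedAddCommGroup Y] [NormedSpace ℝ Y]
    (K : X →ₗ[ℝ] Y →ₗ[ℝ] ℝ)
    {s domg : Set X} {domh : Set Y} {f g ψX : X → ℝ} {hstar ψY : Y → ℝ}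
    {f' ψX' : X → X →L[ℝ] ℝ} {ψY' : Y → Y →L[ℝ] ℝ} {l α β : ℝ}
    {xbar xtil xhat : X} {ybar ytil yhat : Y}
    (hf : ConvexOn ℝ s f) (hf' : ∀ u ∈ s, HasFDerivWithinAt f (f' u) s u)
    (hlip : ∀ u ∈ s, ‖f' u - f' xbar‖ ≤ l * ‖u - xbar‖)
    (hdomg : domg ⊆ s) (hxbar : xbar ∈ s)
    (hg : ConvexOn ℝ domg g) (hh : ConvexOn ℝ domh hstar)
    (hψX : HasFDerivWithinAt ψX (ψX' xhat) domg xhat)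
    (hψY : HasFDerivWithinAt ψY (ψY' yhat) domh yhat)
    (hxhat : xhat ∈ domg)
    (hxmin : IsMinOn (fun u => f xbar + f' xbar (u - xbar) + g u + K u ytil +
      α * bregmanDiv ψX ψX' u xbar) domg xhat)
    (hyhat : yhat ∈ domh)
    (hymin : IsMinOn (fun v => hstar v - K xtil v + β * bregmanDiv ψY ψY' v ybar) domh yhat)
    {x : X} (hx : x ∈ domg) {y : Y} (hy : y ∈ domh) :
    saddleFunction K f g hstar xhat y - saddleFunction K f g hstar x yhat ≤
      α * (bregmanDiv ψX ψX' x xbar - bregmanDiv ψX ψX' x xhat - bregmanDiv ψX ψX' xhat xbar) +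
        l / 2 * ‖xhat - xbar‖ ^ 2 +
        β * (bregmanDiv ψY ψY' y ybar - bregmanDiv ψY ψY' y yhat - bregmanDiv ψY ψY' yhat ybar) +
        K (x - xhat) (ytil - yhat) - K (xtil - xhat) (y - yhat) := by
  have hprimal := add_le_add_bregmanDiv_of_isMinOn_linearized hf hf' hlip hdomg hxbar
    (hg.add ((K.flip ytil).convexOn hg.1)) hψX
    (by simpa only [Pi.add_apply, LinearMap.flip_apply, add_assoc] using hxmin) hxhat hx
  have hdual := le_add_bregmanDiv_of_isMinOn (hh.sub ((K xtil).concaveOn hh.1)) hψY hymin hyhat hy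
  simp only [saddleFunction, Pi.add_apply, Pi.sub_apply, LinearMap.flip_apply, map_sub,
    LinearMap.sub_apply] at hprimal hdual ⊢
  linarith

/-- Lemma 1 of Chambolle–Pock (2016): the fundamental descent inequality for one
generic primal-dual step `(x̂, ŷ) = PD_{τ,σ}(x̄, ȳ, x̃, ỹ)`.  The extended-real-valued
proper l.s.c. convex functions `g, h*` are encoded by a real-valued function together
with its (convex) domain; the minimization defining the step, and the conclusion, are
taken over those domains (outside them the original extended-real statement is vacuous). -/
theorem stmt_0
    {X Y : Type*} [NormedAddCommGroup X] [NormedSpace ℝ X] [FiniteDimensional ℝ X]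
    [NormedAddCommGroup Y] [NormedSpace ℝ Y] [FiniteDimensional ℝ Y]
    -- bounded linear operator into the continuous dual of Y
    (K : X →L[ℝ] Y →L[ℝ] ℝ)
    -- f convex differentiable with L_f-Lipschitz gradient
    (Lf : ℝ) (hLf : 0 ≤ Lf)
    (f : X → ℝ) (f' : X → X →L[ℝ] ℝ)
    (hfconv : ConvexOn ℝ Set.univ f)
    (hfderiv : ∀ x, HasFDerivAt f (f' x) x)
    (hfLip : ∀ x x' : X, ‖f' x - f' x'‖ ≤ Lf * ‖x - x'‖)
    -- g proper l.s.c. convex with domain domg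
    (domg : Set X) (hdomgne : domg.Nonempty) (hdomgconv : Convex ℝ domg)
    (g : X → ℝ) (hgconv : ConvexOn ℝ domg g) (hglsc : LowerSemicontinuousOn g domg)
    -- h* proper l.s.c. convex with domain domh
    (domh : Set Y) (hdomhne : domh.Nonempty) (hdomhconv : Convex ℝ domh)
    (hstar : Y → ℝ) (hhconv : ConvexOn ℝ domh hstar)
    (hhlsc : LowerSemicontinuousOn hstar domh)
    -- distance-generating functions: differentiable, 1-strongly convex
    (ψX : X → ℝ) (ψX' : X → X →L[ℝ] ℝ) (hψXd : ∀ x, HasFDerivAt ψX (ψX' x) x)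
    (hψXsc : ∀ (v v' : X) (l : ℝ), 0 ≤ l → l ≤ 1 →
      ψX (l • v + (1 - l) • v') ≤
        l * ψX v + (1 - l) * ψX v' - 1 / 2 * l * (1 - l) * ‖v - v'‖ ^ 2)
    (ψY : Y → ℝ) (ψY' : Y → Y →L[ℝ] ℝ) (hψYd : ∀ y, HasFDerivAt ψY (ψY' y) y)
    (hψYsc : ∀ (v v' : Y) (l : ℝ), 0 ≤ l → l ≤ 1 →
      ψY (l • v + (1 - l) • v') ≤
        l * ψY v + (1 - l) * ψY v' - 1 / 2 * l * (1 - l) * ‖v - v'‖ ^ 2)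
    -- Bregman divergences
    (DX : X → X → ℝ) (hDX : ∀ x' x, DX x' x = ψX x' - ψX x - ψX' x (x' - x))
    (DY : Y → Y → ℝ) (hDY : ∀ y' y, DY y' y = ψY y' - ψY y - ψY' y (y' - y))
    -- the saddle function
    (L : X → Y → ℝ) (hLdef : ∀ x y, L x y = K x y + f x + g x - hstar y)
    -- stepsizes
    (τ σ : ℝ) (hτ : 0 < τ) (hσ : 0 < σ)
    -- the primal-dual step (x̂, ŷ) = PD_{τ,σ}(x̄, ȳ, x̃, ỹ)
    (xbar xtil xhat : X) (ybar ytil yhat : Y)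
    (hxhat : xhat ∈ domg ∧ ∀ u ∈ domg,
      f xbar + f' xbar (xhat - xbar) + g xhat + K xhat ytil + 1 / τ * DX xhat xbar ≤
        f xbar + f' xbar (u - xbar) + g u + K u ytil + 1 / τ * DX u xbar)
    (hyhat : yhat ∈ domh ∧ ∀ v ∈ domh,
      hstar yhat - K xtil yhat + 1 / σ * DY yhat ybar ≤
        hstar v - K xtil v + 1 / σ * DY v ybar) :
    ∀ x ∈ domg, ∀ y ∈ domh,
      L xhat y - L x yhat ≤
        1 / τ * (DX x xbar - DX x xhat - DX xhat xbar) + Lf / 2 * ‖xhat - xbar‖ ^ 2 +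
          1 / σ * (DY y ybar - DY y yhat - DY yhat ybar) +
          K (x - xhat) (ytil - yhat) - K (xtil - xhat) (y - yhat) := by
  obtain ⟨rfl, rfl, rfl⟩ : DX = bregmanDiv ψX ψX' ∧ DY = bregmanDiv ψY ψY' ∧
      L = saddleFunction K.toLinearMap₁₂ f g hstar := ⟨funext₂ hDX, funext₂ hDY, funext₂ hLdef⟩
  exact fun x hx y hy => stmt_0_general K.toLinearMap₁₂ hfconv
    (fun u _ => (hfderiv u).hasFDerivWithinAt) (fun u _ => hfLip u xbar) (subset_univ domg)
    (mem_univ xbar) hgconv hhconv (hψXd xhat).hasFDerivWithinAt (hψYd yhat).hasFDerivWithinAt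
    hxhat.1 hxhat.2 hyhat.1 hyhat.2 hx hy
end

section
/- (Increasing averaging for the relaxed primal-dual algorithm RPDA.) Fix q ≥ 0 and set w_t = t^q for t ≥ 1. Let τ, σ > 0 and ρ ∈ (0, 2) satisfy (1/τ − L_f/(2 − ρ))·(1/σ) ≥ ‖K‖², and let 0 < ρ_t ≤ ρ_{t+1} ≤ ρ for all t ≥ 0. Starting from z⁰ = (x⁰, y⁰) ∈ 𝕏 × 𝕐, for each t ≥ 0 let (ξ^{t+1}, η^{t+1}) = PD_{τ,σ}(x^t, y^t, 2ξ^{t+1} − x^t, y^t) and z^{t+1} = (x^{t+1}, y^{t+1}) = (1 − ρ_t)z^t + ρ_t(ξ^{t+1}, η^{t+1}). Set S_T = Σ_{t=1}^T w_t, x̄^T = (1/S_T) Σ_{t=1}^T w_t ξ^t and ȳ^T = (1/S_T) Σ_{t=1}^T w_t η^t. Then for every integer T ≥ 1, every (x, y) ∈ 𝕏 × 𝕐, and every Ω ∈ ℝ such that (1/2)‖(x, y) − z^t‖²_{M_{τ,σ}} ≤ Ω for all t ≥ 0, one has L(x̄^T, y) − L(x, ȳ^T) ≤ (q + 1)Ω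 / (ρ_0 T). -/
open scoped RealInnerProductSpace

/-!
Each iteration consists of two proximal steps, so the three-point inequality for minimisers of
strongly convex functions applies to both. Adding the two, with the descent lemma for `f`, bounds
the saddle gap at `(ξ, η)` by a difference of the energies `E(u, v) = (1/2)‖(u, v)‖²_M` plus
`(L_f/2)‖ξ - x^t‖² - E(ξ - x^t, η - y^t)`. Relaxation replaces `E(z - (ξ, η))` by
`E(z - z^{t+1})`, and the step-size condition makes the remaining error
`(L_f/2)‖ξ - x^t‖² - (2 - ρ_t) E(ξ - x^t, η - y^t)` nonpositive. Hence
`ρ_t · gap_t ≤ E_t - E_{t+1}`.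
Since `w_t` increases and `1/ρ_t` decreases, summation by parts gives
`∑ w_t gap_t ≤ w_T Ω / ρ₀`. Jensen's inequality moves the gap to the averaged iterates, and
`T · T^q ≤ (q + 1) ∑ t^q` by comparison with `∫ x^q`.
-/

section Convexity

variable {E : Type*} [NormedAddCommGroup E]

lemma add_modulus_le_of_isMinOn [NormedSpace ℝ E] {s : Set E} {φ : ℝ → ℝ} {F : E → ℝ} {p u : E}
    (hF : UniformConvexOn s φ F) (hmin : IsMinOn F s p) (hp : p ∈ s) (hu : u ∈ s) :
    F p + φ ‖u - p‖ ≤ F u := by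
  have hsegment : ∀ r ∈ Set.Ioo (0 : ℝ) 1, F p + (1 - r) * φ ‖u - p‖ ≤ F u := by
    intro r hr
    have hr1 : 0 ≤ 1 - r := sub_nonneg.2 hr.2.le
    have hle : F p ≤ F (r • u + (1 - r) • p) := hmin (hF.1 hu hp hr.1.le hr1 (by ring))
    have hconv := hF.2 hu hp hr.1.le hr1 (by ring)
    simp only [smul_eq_mul] at hconv
    exact le_of_mul_le_mul_left (by linarith) hr.1
  have hlim : Filter.Tendsto (fun r : ℝ => F p + (1 - r) * φ ‖u - p‖)
      (nhdsWithin 0 (Set.Ioi 0)) (nhds (F p + φ ‖u - p‖)) :=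
    tendsto_nhdsWithin_of_tendsto_nhds (Continuous.tendsto' (by fun_prop) _ _ (by simp))
  exact le_of_tendsto hlim (Filter.eventually_of_mem (Ioo_mem_nhdsGT one_pos) hsegment)

lemma strongConvexOn_add_norm_sub_sq [InnerProductSpace ℝ E] {s : Set E} {φ : E → ℝ}
    (hφ : ConvexOn ℝ s φ) (m : ℝ) (a : E) :
    StrongConvexOn s m fun u => φ u + m / 2 * ‖u - a‖ ^ 2 := by
  rw [strongConvexOn_iff_convex]
  have hlinear : ConvexOn ℝ s fun u => (-m) * ⟪a, u⟫ :=
    ((-m) • innerₗ E a).convexOn hφ.1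
  refine ((hφ.add hlinear).add_const (m / 2 * ‖a‖ ^ 2)).congr fun u _ => ?_
  simp only [Pi.add_apply, norm_sub_sq_real, real_inner_comm]
  ring

lemma add_apply_sub_le_of_convexOn [NormedSpace ℝ E] {s : Set E} {f : E → ℝ} {f' : E →L[ℝ] ℝ}
    {a x : E} (hf : ConvexOn ℝ s f) (ha : a ∈ s) (hx : x ∈ s) (hf' : HasFDerivAt f f' a) :
    f a + f' (x - a) ≤ f x := by
  have hderiv : HasDerivAt (f ∘ AffineMap.lineMap a x) (f' (x - a)) (0 : ℝ) :=
    HasFDerivAt.comp_hasDerivAt 0 (by simpa using hf') AffineMap.hasDerivAt_lineMap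
  have hslope := (hf.comp_affineMap (AffineMap.lineMap a x)).le_slope_of_hasDerivAt
    (by simpa using ha) (by simpa using hx) one_pos hderiv
  simp only [slope_def_field, Function.comp_apply, AffineMap.lineMap_apply_zero,
    AffineMap.lineMap_apply_one, sub_zero, div_one] at hslope
  linarith

lemma le_add_apply_sub_add_norm_sub_sq [NormedSpace ℝ E] {f : E → ℝ} {f' : E → E →L[ℝ] ℝ}
    {L : ℝ} {a x : E} (hf' : ∀ y ∈ segment ℝ a x, HasFDerivAt f (f' y) y)
    (hL : ∀ y ∈ segment ℝ a x, ‖f' y - f' a‖ ≤ L * ‖y - a‖) :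
    f x ≤ f a + f' a (x - a) + L / 2 * ‖x - a‖ ^ 2 := by
  let ℓ : ℝ → E := AffineMap.lineMap a x
  have hℓ : ∀ s ∈ Set.Icc (0 : ℝ) 1, ℓ s ∈ segment ℝ a x := fun s hs => by
    rw [segment_eq_image_lineMap]
    exact Set.mem_image_of_mem _ hs
  have hpath : ∀ s ∈ Set.Icc (0 : ℝ) 1, HasDerivAt (f ∘ ℓ) (f' (ℓ s) (x - a)) s := fun s hs =>
    (hf' _ (hℓ s hs)).comp_hasDerivAt s AffineMap.hasDerivAt_lineMap
  have hquad : ∀ s : ℝ, HasDerivAt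
      (fun s => f a + s * f' a (x - a) + L / 2 * ‖x - a‖ ^ 2 * s ^ 2)
      (f' a (x - a) + L / 2 * ‖x - a‖ ^ 2 * (2 * s)) s := fun s =>
    ((((hasDerivAt_id s).mul_const (f' a (x - a))).const_add (f a)).add
      (((hasDerivAt_id s).pow 2).const_mul (L / 2 * ‖x - a‖ ^ 2))).congr_deriv (by simp)
  have hslope : ∀ s ∈ Set.Ico (0 : ℝ) 1,
      f' (ℓ s) (x - a) ≤ f' a (x - a) + L / 2 * ‖x - a‖ ^ 2 * (2 * s) := fun s hs => by
    have hnorm : ‖ℓ s - a‖ = s * ‖x - a‖ := by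
      simp [ℓ, AffineMap.lineMap_apply, norm_smul, abs_of_nonneg hs.1]
    have hop : (f' (ℓ s) - f' a) (x - a) ≤ L * (s * ‖x - a‖) * ‖x - a‖ := by
      rw [← hnorm]
      exact (le_abs_self _).trans
        ((f' (ℓ s) - f' a).le_of_opNorm_le (hL _ (hℓ s (Set.Ico_subset_Icc_self hs))) _)
    rw [sub_apply] at hop
    linarith
  have hcompare := image_le_of_deriv_right_le_deriv_boundary
    (fun s hs => (hpath s hs).continuousAt.continuousWithinAt)
    (fun s hs => (hpath s (Set.Ico_subset_Icc_self hs)).hasDerivWithinAt) (by simp [ℓ])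
    (fun s _ => (hquad s).continuousAt.continuousWithinAt)
    (fun s _ => (hquad s).hasDerivWithinAt) hslope (Set.right_mem_Icc.2 zero_le_one)
  simpa [ℓ] using hcompare

end Convexity

section Prox

variable {E : Type*} [NormedAddCommGroup E]

/-- `p` is the proximal point of `φ + indicator of s` at the centre `a`, with step size `c`: it
minimises `φ u + (1 / c) * ((1 / 2) * ‖u - a‖ ^ 2)` over `u ∈ s`. An extended-valued function is
encoded by its effective domain `s` and its values there. -/
def IsProx (s : Set E) (φ : E → ℝ) (c : ℝ) (a p : E) : Prop :=
  p ∈ s ∧ ∀ u ∈ s,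
    φ p + 1 / c * (1 / 2 * ‖p - a‖ ^ 2) ≤ φ u + 1 / c * (1 / 2 * ‖u - a‖ ^ 2)

lemma IsProx.three_point [InnerProductSpace ℝ E] {s : Set E} {φ : E → ℝ} {c : ℝ} {a p u : E}
    (hp : IsProx s φ c a p) (hφ : ConvexOn ℝ s φ) (hu : u ∈ s) :
    φ p + 1 / (2 * c) * ‖p - a‖ ^ 2 + 1 / (2 * c) * ‖u - p‖ ^ 2 ≤
      φ u + 1 / (2 * c) * ‖u - a‖ ^ 2 := by
  have hcoef : 1 / (2 * c) = 1 / c / 2 := by rw [mul_comm, div_mul_eq_div_div]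
  have hmin : IsMinOn (fun v => φ v + 1 / c / 2 * ‖v - a‖ ^ 2) s p :=
    isMinOn_iff.2 fun v hv => by linarith [hp.2 v hv]
  rw [hcoef]
  exact add_modulus_le_of_isMinOn (strongConvexOn_add_norm_sub_sq hφ (1 / c) a) hmin hp.1 hu

end Prox

section Summation

lemma sum_Icc_one_eq_sum_range {M : Type*} [AddCommMonoid M] (F : ℕ → M) (T : ℕ) :
    ∑ t ∈ Finset.Icc 1 T, F t = ∑ t ∈ Finset.range T, F (t + 1) := by
  rw [Finset.range_eq_Ico, Finset.sum_Ico_add' F 0 T 1]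
  rfl

-- Summation by parts; the boundary term makes the induction go through.
lemma sum_mul_sub_succ_add_le {w c A : ℕ → ℝ} {Ω : ℝ} (hw : Monotone w) (hw0 : 0 ≤ w 0)
    (hc : Antitone c) (hc0 : ∀ t, 0 ≤ c t) (hA0 : ∀ t, 0 ≤ A t) (hA : ∀ t, A t ≤ Ω) (T : ℕ) :
    ∑ t ∈ Finset.range T, w (t + 1) * (c t * (A t - A (t + 1))) + w T * (c T * A T) ≤
      w T * (c 0 * Ω) := by
  have hcA : ∀ t, c t * A t ≤ c 0 * Ω := fun t =>
    mul_le_mul (hc t.zero_le) (hA t) (hA0 t) (hc0 0)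
  induction T with
  | zero => simpa using mul_le_mul_of_nonneg_left (hcA 0) hw0
  | succ T ih =>
    have hweight : (w (T + 1) - w T) * (c T * A T) ≤ (w (T + 1) - w T) * (c 0 * Ω) :=
      mul_le_mul_of_nonneg_left (hcA T) (sub_nonneg.2 (hw T.le_succ))
    have hcoef : w (T + 1) * (c (T + 1) * A (T + 1)) ≤ w (T + 1) * (c T * A (T + 1)) :=
      mul_le_mul_of_nonneg_left (mul_le_mul_of_nonneg_right (hc T.le_succ) (hA0 _))
        (hw0.trans (hw (T + 1).zero_le))
    rw [Finset.sum_range_succ]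
    linarith

lemma natCast_rpow_add_one_le_mul_sum {q : ℝ} (hq : 0 ≤ q) (T : ℕ) :
    (T : ℝ) ^ (q + 1) ≤ (q + 1) * ∑ t ∈ Finset.Icc 1 T, (t : ℝ) ^ q := by
  have hmono : MonotoneOn (fun x : ℝ => x ^ q) (Set.Icc 0 (0 + T)) :=
    (Real.monotoneOn_rpow_Ici_of_exponent_nonneg hq).mono Set.Icc_subset_Ici_self
  have hint := hmono.integral_le_sum
  rw [integral_rpow (Or.inl (by linarith)), Real.zero_rpow (by linarith),
    div_le_iff₀' (by linarith)] at hint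
  simpa only [zero_add, sub_zero, sum_Icc_one_eq_sum_range]
    using hint

end Summation

section PrimalDual

variable {X Y : Type*} [NormedAddCommGroup X] [InnerProductSpace ℝ X]
  [NormedAddCommGroup Y] [InnerProductSpace ℝ Y] {K : X →L[ℝ] Y}

/-- The energy `(1/2)‖(u, v)‖²_{M_{τ,σ}}`, which measures the progress of the primal-dual
iteration. -/
noncomputable def pdEnergy (K : X →L[ℝ] Y) (τ σ : ℝ) (u : X) (v : Y) : ℝ :=
  1 / (2 * τ) * ‖u‖ ^ 2 + 1 / (2 * σ) * ‖v‖ ^ 2 - ⟪K u, v⟫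

lemma half_mul_norm_sq_le_pdEnergy {τ σ κ : ℝ} (hσ : 0 < σ)
    (hK : ‖K‖ ^ 2 ≤ (1 / τ - κ) * (1 / σ)) (u : X) (v : Y) :
    κ / 2 * ‖u‖ ^ 2 ≤ pdEnergy K τ σ u v := by
  have hcauchy : ⟪K u, v⟫ ≤ ‖K‖ * ‖u‖ * ‖v‖ :=
    (real_inner_le_norm _ _).trans (mul_le_mul_of_nonneg_right (K.le_opNorm u) (norm_nonneg v))
  have hyoung : ‖K‖ * ‖u‖ * ‖v‖ ≤ σ / 2 * (‖K‖ ^ 2 * ‖u‖ ^ 2) + 1 / (2 * σ) * ‖v‖ ^ 2 := by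
    have hsq : 0 ≤ 1 / (2 * σ) * (σ * (‖K‖ * ‖u‖) - ‖v‖) ^ 2 := by positivity
    have hexpand : 1 / (2 * σ) * (σ * (‖K‖ * ‖u‖) - ‖v‖) ^ 2 =
        σ / 2 * (‖K‖ ^ 2 * ‖u‖ ^ 2) + 1 / (2 * σ) * ‖v‖ ^ 2 - ‖K‖ * ‖u‖ * ‖v‖ := by
      field_simp
      ring
    linarith
  have hop : σ / 2 * (‖K‖ ^ 2 * ‖u‖ ^ 2) ≤ (1 / τ - κ) / 2 * ‖u‖ ^ 2 :=
    calc σ / 2 * (‖K‖ ^ 2 * ‖u‖ ^ 2)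
      _ ≤ σ / 2 * ((1 / τ - κ) * (1 / σ) * ‖u‖ ^ 2) := by gcongr
      _ = (1 / τ - κ) / 2 * ‖u‖ ^ 2 := by field_simp
  have hcoef : 1 / (2 * τ) = 1 / τ / 2 := by rw [mul_comm, div_mul_eq_div_div]
  rw [pdEnergy, hcoef]
  linarith

lemma pdEnergy_nonneg {τ σ κ : ℝ} (hσ : 0 < σ) (hκ : 0 ≤ κ)
    (hK : ‖K‖ ^ 2 ≤ (1 / τ - κ) * (1 / σ)) (u : X) (v : Y) : 0 ≤ pdEnergy K τ σ u v :=
  le_trans (by positivity) (half_mul_norm_sq_le_pdEnergy hσ hK u v)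

lemma pdEnergy_combo (K : X →L[ℝ] Y) (τ σ r : ℝ) (u u' : X) (v v' : Y) :
    pdEnergy K τ σ ((1 - r) • u + r • u') ((1 - r) • v + r • v') =
      (1 - r) * pdEnergy K τ σ u v + r * pdEnergy K τ σ u' v' -
        r * (1 - r) * pdEnergy K τ σ (u - u') (v - v') := by
  simp only [pdEnergy, norm_add_sq_real, norm_sub_sq_real, norm_smul, mul_pow, map_add, map_sub,
    map_smul, inner_add_left, inner_add_right, inner_sub_left, inner_sub_right,
    real_inner_smul_left, real_inner_smul_right, Real.norm_eq_abs, sq_abs]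
  ring

lemma pdEnergy_sub_relax (K : X →L[ℝ] Y) (τ σ r : ℝ) (x a ξ : X) (y b η : Y) :
    pdEnergy K τ σ (x - ((1 - r) • a + r • ξ)) (y - ((1 - r) • b + r • η)) =
      (1 - r) * pdEnergy K τ σ (x - a) (y - b) + r * pdEnergy K τ σ (x - ξ) (y - η) -
        r * (1 - r) * pdEnergy K τ σ (ξ - a) (η - b) := by
  have hx : x - ((1 - r) • a + r • ξ) = (1 - r) • (x - a) + r • (x - ξ) := by module
  have hy : y - ((1 - r) • b + r • η) = (1 - r) • (y - b) + r • (y - η) := by module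
  rw [hx, hy, pdEnergy_combo, sub_sub_sub_cancel_left, sub_sub_sub_cancel_left]

/-- The saddle function `L(x, y) = ⟨Kx, y⟩ + f(x) + g(x) - h*(y)`, with `h` in the role of `h*`.
The functions `g` and `h` are total, so its values carry meaning only on `dom g × dom h*`. -/
def saddleFn (K : X →L[ℝ] Y) (f g : X → ℝ) (h : Y → ℝ) (x : X) (y : Y) : ℝ :=
  ⟪K x, y⟫ + f x + g x - h y

section SaddleFn

variable {f g : X → ℝ} {domg : Set X} {h : Y → ℝ} {domh : Set Y}

lemma convexOn_saddleFn_left (K : X →L[ℝ] Y) (hf : ConvexOn ℝ domg f) (hg : ConvexOn ℝ domg g)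
    (h : Y → ℝ) (y : Y) : ConvexOn ℝ domg fun x => saddleFn K f g h x y := by
  have hlinear : ConvexOn ℝ domg fun x => ⟪K x, y⟫ :=
    ((innerₗ Y).flip y ∘ₗ (K : X →ₗ[ℝ] Y)).convexOn hg.1
  exact ((hlinear.add hf).add hg).add_const (-h y)

lemma concaveOn_saddleFn_right (K : X →L[ℝ] Y) (f g : X → ℝ) (hh : ConvexOn ℝ domh h) (x : X) :
    ConcaveOn ℝ domh fun y => saddleFn K f g h x y := by
  have hlinear : ConcaveOn ℝ domh fun y => ⟪K x, y⟫ := (innerₗ Y (K x)).concaveOn hh.1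
  exact ((hlinear.add_const (f x)).add_const (g x)).sub hh

lemma saddleFn_centerMass_sub_le {ι : Type*} {s : Finset ι} {w : ι → ℝ} {ξ : ι → X} {η : ι → Y}
    (hf : ConvexOn ℝ domg f) (hg : ConvexOn ℝ domg g) (hh : ConvexOn ℝ domh h)
    (hw : ∀ i ∈ s, 0 ≤ w i) (hs : 0 < ∑ i ∈ s, w i)
    (hξ : ∀ i ∈ s, ξ i ∈ domg) (hη : ∀ i ∈ s, η i ∈ domh) (x : X) (y : Y) :
    saddleFn K f g h (s.centerMass w ξ) y - saddleFn K f g h x (s.centerMass w η) ≤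
      s.centerMass w fun i => saddleFn K f g h (ξ i) y - saddleFn K f g h x (η i) := by
  have hprimal := (convexOn_saddleFn_left K hf hg h y).map_centerMass_le hw hs hξ
  have hdual := (concaveOn_saddleFn_right K f g hh x).le_map_centerMass hw hs hη
  simp only [Finset.centerMass, Function.comp_apply, smul_sub, Finset.sum_sub_distrib]
    at hprimal hdual ⊢
  exact sub_le_sub hprimal hdual

end SaddleFn

variable {f g : X → ℝ} {f' : X → X →L[ℝ] ℝ} {Lf : ℝ} {domg : Set X} {h : Y → ℝ} {domh : Set Y}
  {τ σ : ℝ}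

section Step

variable {a ξ x : X} {b η y : Y}

lemma IsProx.linearized_three_point
    (hξ : IsProx domg (fun u => f a + f' a (u - a) + g u + ⟪K u, b⟫) τ a ξ)
    (hf : ConvexOn ℝ Set.univ f) (hf' : ∀ u, HasFDerivAt f (f' u) u)
    (hLf : ∀ u u', ‖f' u - f' u'‖ ≤ Lf * ‖u - u'‖) (hg : ConvexOn ℝ domg g) (hx : x ∈ domg) :
    f ξ + g ξ + ⟪K ξ, b⟫ + 1 / (2 * τ) * ‖ξ - a‖ ^ 2 + 1 / (2 * τ) * ‖x - ξ‖ ^ 2 ≤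
      f x + g x + ⟪K x, b⟫ + 1 / (2 * τ) * ‖x - a‖ ^ 2 + Lf / 2 * ‖ξ - a‖ ^ 2 := by
  have hlinear : ConvexOn ℝ domg fun u => f' a u + ⟪K u, b⟫ :=
    ((f' a : X →ₗ[ℝ] ℝ) + (innerₗ Y).flip b ∘ₗ (K : X →ₗ[ℝ] Y)).convexOn hg.1
  have hmodel : ConvexOn ℝ domg fun u => f a + f' a (u - a) + g u + ⟪K u, b⟫ := by
    refine ((hg.add hlinear).add_const (f a - f' a a)).congr fun u _ => ?_
    simp only [Pi.add_apply, map_sub]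
    ring
  have hprox := hξ.three_point hmodel hx
  have hbelow := add_apply_sub_le_of_convexOn hf (Set.mem_univ a) (Set.mem_univ x) (hf' a)
  have habove := le_add_apply_sub_add_norm_sub_sq (x := ξ) (fun u _ => hf' u) fun u _ => hLf u a
  linarith

lemma saddleFn_sub_le_of_isProx
    (hξ : IsProx domg (fun u => f a + f' a (u - a) + g u + ⟪K u, b⟫) τ a ξ)
    (hη : IsProx domh (fun v => h v - ⟪K (2 • ξ - a), v⟫) σ b η)
    (hf : ConvexOn ℝ Set.univ f) (hf' : ∀ u, HasFDerivAt f (f' u) u)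
    (hLf : ∀ u u', ‖f' u - f' u'‖ ≤ Lf * ‖u - u'‖)
    (hg : ConvexOn ℝ domg g) (hh : ConvexOn ℝ domh h) (hx : x ∈ domg) (hy : y ∈ domh) :
    saddleFn K f g h ξ y - saddleFn K f g h x η ≤
      pdEnergy K τ σ (x - a) (y - b) - pdEnergy K τ σ (x - ξ) (y - η) -
        pdEnergy K τ σ (ξ - a) (η - b) + Lf / 2 * ‖ξ - a‖ ^ 2 := by
  have hprimal := hξ.linearized_three_point hf hf' hLf hg hx
  have hlinear : ConcaveOn ℝ domh fun v => ⟪K (2 • ξ - a), v⟫ :=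
    (innerₗ Y (K (2 • ξ - a))).concaveOn hh.1
  have hdual := hη.three_point (hh.sub hlinear) hy
  -- The extrapolation `2ξ - a` makes the bilinear terms recombine into those of the energies.
  have hcross : ⟪K ξ, y⟫ - ⟪K x, η⟫ + ⟪K x, b⟫ - ⟪K ξ, b⟫ + ⟪K (2 • ξ - a), η⟫ -
      ⟪K (2 • ξ - a), y⟫ =
        -⟪K (x - a), y - b⟫ + ⟪K (x - ξ), y - η⟫ + ⟪K (ξ - a), η - b⟫ := by
    simp only [two_smul, map_add, map_sub, inner_add_left, inner_sub_left, inner_sub_right]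
    ring
  simp only [saddleFn, pdEnergy]
  linarith

end Step

/-- The relaxed primal-dual algorithm with step sizes `τ`, `σ` and relaxation parameters `ρs`:
`(ξ (t + 1), η (t + 1))` is the primal-dual step from `z t = (xs t, ys t)`, and `z (t + 1)` is its
relaxation. The terms `ξ 0` and `η 0` are unconstrained. -/
structure IsRPDA (K : X →L[ℝ] Y) (f : X → ℝ) (f' : X → X →L[ℝ] ℝ) (domg : Set X) (g : X → ℝ)
    (domh : Set Y) (h : Y → ℝ) (τ σ : ℝ) (ρs : ℕ → ℝ) (xs : ℕ → X) (ys : ℕ → Y) (ξ : ℕ → X)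
    (η : ℕ → Y) : Prop where
  primal_step (t : ℕ) : IsProx domg
    (fun u => f (xs t) + f' (xs t) (u - xs t) + g u + ⟪K u, ys t⟫) τ (xs t) (ξ (t + 1))
  dual_step (t : ℕ) : IsProx domh
    (fun v => h v - ⟪K (2 • ξ (t + 1) - xs t), v⟫) σ (ys t) (η (t + 1))
  primal_relax (t : ℕ) : xs (t + 1) = (1 - ρs t) • xs t + ρs t • ξ (t + 1)
  dual_relax (t : ℕ) : ys (t + 1) = (1 - ρs t) • ys t + ρs t • η (t + 1)

namespace IsRPDA

variable {ρ : ℝ} {ρs : ℕ → ℝ} {xs ξ : ℕ → X} {ys η : ℕ → Y} {x : X} {y : Y}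

lemma primal_mem (hz : IsRPDA K f f' domg g domh h τ σ ρs xs ys ξ η) {t : ℕ} (ht : 1 ≤ t) :
    ξ t ∈ domg := by
  simpa [Nat.sub_add_cancel ht] using (hz.primal_step (t - 1)).1

lemma dual_mem (hz : IsRPDA K f f' domg g domh h τ σ ρs xs ys ξ η) {t : ℕ} (ht : 1 ≤ t) :
    η t ∈ domh := by
  simpa [Nat.sub_add_cancel ht] using (hz.dual_step (t - 1)).1

lemma mul_saddleFn_sub_le (hz : IsRPDA K f f' domg g domh h τ σ ρs xs ys ξ η)
    (hf : ConvexOn ℝ Set.univ f) (hf' : ∀ u, HasFDerivAt f (f' u) u) (hLf0 : 0 ≤ Lf)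
    (hLf : ∀ u u', ‖f' u - f' u'‖ ≤ Lf * ‖u - u'‖)
    (hg : ConvexOn ℝ domg g) (hh : ConvexOn ℝ domh h) (hσ : 0 < σ) (hρ2 : ρ < 2)
    (hstep : ‖K‖ ^ 2 ≤ (1 / τ - Lf / (2 - ρ)) * (1 / σ))
    {t : ℕ} (hρspos : 0 < ρs t) (hρsle : ρs t ≤ ρ) (hx : x ∈ domg) (hy : y ∈ domh) :
    ρs t * (saddleFn K f g h (ξ (t + 1)) y - saddleFn K f g h x (η (t + 1))) ≤
      pdEnergy K τ σ (x - xs t) (y - ys t) -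
        pdEnergy K τ σ (x - xs (t + 1)) (y - ys (t + 1)) := by
  have h2ρ : 0 < 2 - ρ := sub_pos.2 hρ2
  have hgap := saddleFn_sub_le_of_isProx (hz.primal_step t) (hz.dual_step t) hf hf' hLf hg hh hx hy
  have hsmooth : Lf / 2 * ‖ξ (t + 1) - xs t‖ ^ 2 ≤
      (2 - ρs t) * pdEnergy K τ σ (ξ (t + 1) - xs t) (η (t + 1) - ys t) :=
    calc Lf / 2 * ‖ξ (t + 1) - xs t‖ ^ 2
      _ = (2 - ρ) * (Lf / (2 - ρ) / 2 * ‖ξ (t + 1) - xs t‖ ^ 2) := by field_simp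
      _ ≤ (2 - ρ) * pdEnergy K τ σ (ξ (t + 1) - xs t) (η (t + 1) - ys t) := by
        gcongr
        exact half_mul_norm_sq_le_pdEnergy hσ hstep _ _
      _ ≤ (2 - ρs t) * pdEnergy K τ σ (ξ (t + 1) - xs t) (η (t + 1) - ys t) := by
        gcongr
        exact pdEnergy_nonneg hσ (by positivity) hstep _ _
  have hscaled := mul_le_mul_of_nonneg_left (hgap.trans (add_le_add_right hsmooth _)) hρspos.le
  rw [hz.primal_relax t, hz.dual_relax t, pdEnergy_sub_relax]
  linarith

theorem centerMass_gap_le (hz : IsRPDA K f f' domg g domh h τ σ ρs xs ys ξ η)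
    (hf : ConvexOn ℝ Set.univ f) (hf' : ∀ u, HasFDerivAt f (f' u) u) (hLf0 : 0 ≤ Lf)
    (hLf : ∀ u u', ‖f' u - f' u'‖ ≤ Lf * ‖u - u'‖)
    (hg : ConvexOn ℝ domg g) (hh : ConvexOn ℝ domh h) (hσ : 0 < σ) (hρ2 : ρ < 2)
    (hstep : ‖K‖ ^ 2 ≤ (1 / τ - Lf / (2 - ρ)) * (1 / σ))
    (hρspos : ∀ t, 0 < ρs t) (hρsmono : Monotone ρs) (hρsle : ∀ t, ρs t ≤ ρ)
    {w : ℕ → ℝ} (hw : Monotone w) (hw0 : 0 ≤ w 0) {T : ℕ} (hwT : 0 < ∑ t ∈ Finset.Icc 1 T, w t)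
    (hx : x ∈ domg) (hy : y ∈ domh) {Ω : ℝ}
    (hΩ : ∀ t, pdEnergy K τ σ (x - xs t) (y - ys t) ≤ Ω) :
    saddleFn K f g h ((Finset.Icc 1 T).centerMass w ξ) y -
        saddleFn K f g h x ((Finset.Icc 1 T).centerMass w η) ≤
      w T * Ω / (ρs 0 * ∑ t ∈ Finset.Icc 1 T, w t) := by
  have hw_nonneg : ∀ t, 0 ≤ w t := fun t => hw0.trans (hw t.zero_le)
  have henergy : ∀ t, 0 ≤ pdEnergy K τ σ (x - xs t) (y - ys t) := fun t =>
    pdEnergy_nonneg hσ (div_nonneg hLf0 (sub_nonneg.2 hρ2.le)) hstep _ _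
  have hparts := sum_mul_sub_succ_add_le hw hw0
    (fun _ _ hst => inv_anti₀ (hρspos _) (hρsmono hst)) (fun t => (inv_pos.2 (hρspos t)).le)
    henergy hΩ T
  have hgaps : ∑ t ∈ Finset.Icc 1 T, w t * (saddleFn K f g h (ξ t) y - saddleFn K f g h x (η t)) ≤
      w T * ((ρs 0)⁻¹ * Ω) := by
    rw [sum_Icc_one_eq_sum_range]
    refine (Finset.sum_le_sum fun t _ => mul_le_mul_of_nonneg_left ?_ (hw_nonneg (t + 1))).trans
      ((le_add_of_nonneg_right ?_).trans hparts)
    · rw [le_inv_mul_iff₀ (hρspos t)]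
      exact hz.mul_saddleFn_sub_le hf hf' hLf0 hLf hg hh hσ hρ2 hstep (hρspos t) (hρsle t) hx hy
    · exact mul_nonneg (hw_nonneg T) (mul_nonneg (inv_pos.2 (hρspos T)).le (henergy T))
  calc saddleFn K f g h ((Finset.Icc 1 T).centerMass w ξ) y -
        saddleFn K f g h x ((Finset.Icc 1 T).centerMass w η)
    _ ≤ (∑ t ∈ Finset.Icc 1 T, w t)⁻¹ *
        ∑ t ∈ Finset.Icc 1 T, w t * (saddleFn K f g h (ξ t) y - saddleFn K f g h x (η t)) :=
      saddleFn_centerMass_sub_le (hf.subset (Set.subset_univ _) hg.1) hg hh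
        (fun t _ => hw_nonneg t) hwT (fun t ht => hz.primal_mem (Finset.mem_Icc.1 ht).1)
        (fun t ht => hz.dual_mem (Finset.mem_Icc.1 ht).1) x y
    _ ≤ (∑ t ∈ Finset.Icc 1 T, w t)⁻¹ * (w T * ((ρs 0)⁻¹ * Ω)) :=
      mul_le_mul_of_nonneg_left hgaps (inv_pos.2 hwT).le
    _ = w T * Ω / (ρs 0 * ∑ t ∈ Finset.Icc 1 T, w t) := by
      rw [div_eq_mul_inv, mul_inv]
      ring

end IsRPDA

end PrimalDual

theorem stmt_2_general
    {X Y : Type*} [NormedAddCommGroup X] [InnerProductSpace ℝ X]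
    [NormedAddCommGroup Y] [InnerProductSpace ℝ Y]
    {K : X →L[ℝ] Y} {Lf : ℝ} {f g : X → ℝ} {f' : X → X →L[ℝ] ℝ} {domg : Set X}
    {h : Y → ℝ} {domh : Set Y} {q τ σ ρ : ℝ} {ρs : ℕ → ℝ} {xs ξ : ℕ → X} {ys η : ℕ → Y}
    (hLf0 : 0 ≤ Lf) (hf : ConvexOn ℝ Set.univ f) (hf' : ∀ u, HasFDerivAt f (f' u) u)
    (hLf : ∀ u u', ‖f' u - f' u'‖ ≤ Lf * ‖u - u'‖)
    (hg : ConvexOn ℝ domg g) (hh : ConvexOn ℝ domh h) (hq : 0 ≤ q)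
    (_hτ : 0 < τ) (hσ : 0 < σ) (hρ2 : ρ < 2)
    (hstep : ‖K‖ ^ 2 ≤ (1 / τ - Lf / (2 - ρ)) * (1 / σ))
    (hρspos : ∀ t, 0 < ρs t) (hρsmono : Monotone ρs) (hρsle : ∀ t, ρs t ≤ ρ)
    (hz : IsRPDA K f f' domg g domh h τ σ ρs xs ys ξ η)
    {T : ℕ} (hT : 1 ≤ T) {x : X} (hx : x ∈ domg) {y : Y} (hy : y ∈ domh) {Ω : ℝ}
    (hΩ : ∀ t, pdEnergy K τ σ (x - xs t) (y - ys t) ≤ Ω) :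
    saddleFn K f g h ((Finset.Icc 1 T).centerMass (fun t => (t : ℝ) ^ q) ξ) y -
        saddleFn K f g h x ((Finset.Icc 1 T).centerMass (fun t => (t : ℝ) ^ q) η) ≤
      (q + 1) * Ω / (ρs 0 * T) := by
  have hTpos : (0 : ℝ) < T := by exact_mod_cast hT
  have hρ0 : 0 < ρs 0 := hρspos 0
  have hpow : (T : ℝ) ^ q * T ≤ (q + 1) * ∑ t ∈ Finset.Icc 1 T, (t : ℝ) ^ q := by
    rw [← Real.rpow_add_one hTpos.ne']
    exact natCast_rpow_add_one_le_mul_sum hq T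
  have hS : 0 < ∑ t ∈ Finset.Icc 1 T, (t : ℝ) ^ q :=
    pos_of_mul_pos_right (lt_of_lt_of_le (by positivity) hpow) (by linarith)
  have hΩ0 : 0 ≤ Ω :=
    (pdEnergy_nonneg hσ (div_nonneg hLf0 (sub_nonneg.2 hρ2.le)) hstep _ _).trans (hΩ 0)
  refine (hz.centerMass_gap_le hf hf' hLf0 hLf hg hh hσ hρ2 hstep hρspos hρsmono hρsle
    (fun s t hst => Real.rpow_le_rpow s.cast_nonneg (Nat.cast_le.2 hst) hq) (by positivity) hS
    hx hy hΩ).trans ?_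
  rw [div_le_div_iff₀ (by positivity) (by positivity)]
  linarith [mul_le_mul_of_nonneg_right hpow (mul_nonneg hΩ0 hρ0.le)]

/-- Increasing iterate averaging for the relaxed primal-dual algorithm (RPDA):
with weights `w_t = t^q`, the weighted averages of the inner iterates `(ξ^t, η^t)`
satisfy a `(q+1)Ω/(ρ₀T)` bound on the pointwise saddle-point gap, where `Ω` bounds
`(1/2)‖(x,y) - z^t‖²_{M_{τ,σ}}` along the iterates. -/
theorem stmt_2
    {X Y : Type*} [NormedAddCommGroup X] [InnerProductSpace ℝ X] [FiniteDimensional ℝ X]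
    [NormedAddCommGroup Y] [InnerProductSpace ℝ Y] [FiniteDimensional ℝ Y]
    (K : X →L[ℝ] Y)
    (Lf : ℝ) (hLf : 0 ≤ Lf)
    (f : X → ℝ) (f' : X → X →L[ℝ] ℝ)
    (hfconv : ConvexOn ℝ Set.univ f)
    (hfderiv : ∀ x, HasFDerivAt f (f' x) x)
    (hfLip : ∀ x x' : X, ‖f' x - f' x'‖ ≤ Lf * ‖x - x'‖)
    (domg : Set X) (hdomgne : domg.Nonempty) (hdomgconv : Convex ℝ domg)
    (g : X → ℝ) (hgconv : ConvexOn ℝ domg g) (hglsc : LowerSemicontinuousOn g domg)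
    (domh : Set Y) (hdomhne : domh.Nonempty) (hdomhconv : Convex ℝ domh)
    (hstar : Y → ℝ) (hhconv : ConvexOn ℝ domh hstar)
    (hhlsc : LowerSemicontinuousOn hstar domh)
    (L : X → Y → ℝ) (hLdef : ∀ x y, L x y = ⟪K x, y⟫ + f x + g x - hstar y)
    -- weight exponent
    (q : ℝ) (hq : 0 ≤ q)
    -- stepsizes and relaxation parameters
    (τ σ ρ : ℝ) (hτ : 0 < τ) (hσ : 0 < σ) (hρ0 : 0 < ρ) (hρ2 : ρ < 2)
    (hstep : ‖K‖ ^ 2 ≤ (1 / τ - Lf / (2 - ρ)) * (1 / σ))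
    (ρs : ℕ → ℝ) (hρspos : ∀ t, 0 < ρs t) (hρsmono : ∀ t, ρs t ≤ ρs (t + 1))
    (hρsle : ∀ t, ρs t ≤ ρ)
    -- the RPDA iterates: (ξ^{t+1}, η^{t+1}) = PD_{τ,σ}(x^t, y^t, 2ξ^{t+1} - x^t, y^t),
    -- z^{t+1} = (1 - ρ_t) z^t + ρ_t (ξ^{t+1}, η^{t+1})
    (xs : ℕ → X) (ys : ℕ → Y) (ξ : ℕ → X) (η : ℕ → Y)
    (hξ : ∀ t : ℕ, ξ (t + 1) ∈ domg ∧ ∀ u ∈ domg,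
      f (xs t) + f' (xs t) (ξ (t + 1) - xs t) + g (ξ (t + 1)) + ⟪K (ξ (t + 1)), ys t⟫ +
          1 / τ * (1 / 2 * ‖ξ (t + 1) - xs t‖ ^ 2) ≤
        f (xs t) + f' (xs t) (u - xs t) + g u + ⟪K u, ys t⟫ +
          1 / τ * (1 / 2 * ‖u - xs t‖ ^ 2))
    (hη : ∀ t : ℕ, η (t + 1) ∈ domh ∧ ∀ v ∈ domh,
      hstar (η (t + 1)) - ⟪K (2 • ξ (t + 1) - xs t), η (t + 1)⟫ +
          1 / σ * (1 / 2 * ‖η (t + 1) - ys t‖ ^ 2) ≤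
        hstar v - ⟪K (2 • ξ (t + 1) - xs t), v⟫ + 1 / σ * (1 / 2 * ‖v - ys t‖ ^ 2))
    (hxrelax : ∀ t : ℕ, xs (t + 1) = (1 - ρs t) • xs t + ρs t • ξ (t + 1))
    (hyrelax : ∀ t : ℕ, ys (t + 1) = (1 - ρs t) • ys t + ρs t • η (t + 1)) :
    ∀ T : ℕ, 1 ≤ T → ∀ x ∈ domg, ∀ y ∈ domh, ∀ Ω : ℝ,
      (∀ t : ℕ,
        1 / (2 * τ) * ‖x - xs t‖ ^ 2 + 1 / (2 * σ) * ‖y - ys t‖ ^ 2 -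
            ⟪K (x - xs t), y - ys t⟫ ≤ Ω) →
      L ((1 / ∑ t ∈ Finset.Icc 1 T, (t : ℝ) ^ q) •
            ∑ t ∈ Finset.Icc 1 T, ((t : ℝ) ^ q) • ξ t) y -
          L x ((1 / ∑ t ∈ Finset.Icc 1 T, (t : ℝ) ^ q) •
            ∑ t ∈ Finset.Icc 1 T, ((t : ℝ) ^ q) • η t) ≤
        (q + 1) * Ω / (ρs 0 * (T : ℝ)) := by
  intro T hT x hx y hy Ω hΩ
  simpa only [hLdef, saddleFn, Finset.centerMass, one_div] using
    stmt_2_general hLf hfconv hfderiv hfLip hgconv hhconv hq hτ hσ hρ2 hstep hρspos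
      (monotone_nat_of_le_succ hρsmono) hρsle ⟨hξ, hη, hxrelax, hyrelax⟩ hT hx hy hΩ
end

section
/- (Algebraic lemma for IPDA weights, part 1.) Let α, r, β, γ be real numbers with 0 < α < 1/3, r > (1 + α)²/(1 − 3α), and 0 ≤ β ≤ γ ≤ α with γ > 0. Define b = min{ (1 − β)/γ , (r(1 − β) − (1 + β))/(γ(1 + 2r + γ)) } and b* = min{ 2 , (r(1 − α) − (1 + α))/(2αr + α(1 + α)) }. Then b ≥ b* and b* > 1. -/
/-!
The second term of `b` is decreasing in `β` and in `γ` as long as it is nonnegative, and its value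
at the extreme point `β = γ = α` is exactly the second term of `b*`. That value exceeds `1`
precisely when `(1 + α)² < r (1 - 3α)`, which is the assumed lower bound on `r`. The first term of
`b` is at least `2` because `2γ + β ≤ 3α < 1`.
-/

/-- The second term in the minimum defining the weight bound `b`, as a function of `r`, `β`, `γ`.
The second term of `b*` is its value at `β = γ = α`. -/
noncomputable def weightRatio (r β γ : ℝ) : ℝ :=
  (r * (1 - β) - (1 + β)) / (γ * (1 + 2 * r + γ))

theorem weightRatio_self (r α : ℝ) :
    weightRatio r α α = (r * (1 - α) - (1 + α)) / (2 * α * r + α * (1 + α)) := by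
  rw [weightRatio]
  congr 1
  ring

theorem one_lt_weightRatio_self_iff {r α : ℝ} (hr : 0 ≤ r) (hα : 0 < α) :
    1 < weightRatio r α α ↔ (1 + α) ^ 2 < r * (1 - 3 * α) := by
  have hgap : r * (1 - α) - (1 + α) - α * (1 + 2 * r + α) = r * (1 - 3 * α) - (1 + α) ^ 2 := by
    ring
  rw [weightRatio, one_lt_div (by positivity), ← sub_pos, hgap, sub_pos]

theorem weightRatio_le_weightRatio {r β β' γ γ' : ℝ} (hr : 0 ≤ r) (hβ : β ≤ β') (hγ₀ : 0 < γ)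
    (hγ : γ ≤ γ') (hnonneg : 0 ≤ weightRatio r β' γ') :
    weightRatio r β' γ' ≤ weightRatio r β γ := by
  have hγ'₀ : 0 < γ' := hγ₀.trans_le hγ
  have hnum' : 0 ≤ r * (1 - β') - (1 + β') := by
    rwa [weightRatio, le_div_iff₀ (by positivity), zero_mul] at hnonneg
  have hnum : r * (1 - β') - (1 + β') ≤ r * (1 - β) - (1 + β) := by gcongr
  have hden : γ * (1 + 2 * r + γ) ≤ γ' * (1 + 2 * r + γ') := by gcongr
  exact div_le_div₀ (hnum'.trans hnum) hnum (by positivity) hden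

theorem stmt_4_general {α r β γ : ℝ} (hα : α < 1 / 3) (hr : (1 + α) ^ 2 / (1 - 3 * α) < r)
    (hβα : β ≤ α) (hγα : γ ≤ α) (hγ : 0 < γ) :
    min 2 ((r * (1 - α) - (1 + α)) / (2 * α * r + α * (1 + α))) ≤
      min ((1 - β) / γ) ((r * (1 - β) - (1 + β)) / (γ * (1 + 2 * r + γ))) ∧
    1 < min 2 ((r * (1 - α) - (1 + α)) / (2 * α * r + α * (1 + α))) := by
  rw [← weightRatio_self, ← weightRatio]
  have hα_den : 0 < 1 - 3 * α := by linarith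
  have hr₀ : 0 ≤ r := (div_nonneg (sq_nonneg _) hα_den.le).trans hr.le
  have hfirst : 2 ≤ (1 - β) / γ := by
    rw [le_div_iff₀ hγ]
    linarith
  have hone : 1 < weightRatio r α α :=
    (one_lt_weightRatio_self_iff hr₀ (hγ.trans_le hγα)).2 ((div_lt_iff₀ hα_den).1 hr)
  have hsecond : weightRatio r α α ≤ weightRatio r β γ :=
    weightRatio_le_weightRatio hr₀ hβα hγ hγα (zero_le_one.trans hone.le)
  exact ⟨min_le_min hfirst hsecond, lt_min one_lt_two hone⟩

theorem stmt_4 (α r β γ : ℝ)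
    (hα0 : 0 < α) (hα13 : α < 1/3)
    (hr : (1 + α) ^ 2 / (1 - 3 * α) < r)
    (hβ0 : 0 ≤ β) (hβγ : β ≤ γ) (hγα : γ ≤ α) (hγ0 : 0 < γ) :
    min 2 ((r * (1 - α) - (1 + α)) / (2 * α * r + α * (1 + α))) ≤
      min ((1 - β) / γ) ((r * (1 - β) - (1 + β)) / (γ * (1 + 2 * r + γ))) ∧
    1 < min 2 ((r * (1 - α) - (1 + α)) / (2 * α * r + α * (1 + α))) :=
  stmt_4_general hα13 hr (hβγ.trans hγα) hγα hγ0
end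

section
/- (Algebraic lemma for IPDA weights, part 2.) Let α, r, β, γ, c be real numbers with 0 < α < 1/3, r > (1 + α)²/(1 − 3α), 0 ≤ β ≤ γ ≤ α, γ > 0, and suppose 1 ≤ c ≤ min{ (1 − β)/γ , (r(1 − β) − (1 + β))/(γ(1 + 2r + γ)) }. Then: (i) 1 − β − cγ ≥ 0; and (ii) 1 − β − 2cγ > 0 and (1 + β + c(γ + γ²))/(1 − β − 2cγ) ≤ r. -/
/-!
Once denominators are cleared, the upper bound on `c` says exactly that
`1 + β + c (γ + γ²) ≤ r (1 - β - 2cγ)`. The left side is positive and `r` is nonnegative, so the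
factor `1 - β - 2cγ` is positive, and dividing by it gives the bound on the quotient. The weaker
inequality (i) follows by adding `cγ ≥ 0`.
-/

section LinearFractional

variable {K : Type*} [Field K] [LinearOrder K] [IsStrictOrderedRing K] {a b c p q r : K}

theorem le_sub_div_add_mul_iff (hpq : 0 < p + r * q) :
    c ≤ (r * a - b) / (p + r * q) ↔ b + c * p ≤ r * (a - c * q) := by
  rw [le_div_iff₀ hpq]
  constructor <;> intro h <;> linarith

theorem pos_and_div_le_of_le_mul (hr : 0 ≤ r) (hb : 0 < b) (h : b ≤ r * a) :
    0 < a ∧ b / a ≤ r := by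
  have ha : 0 < a := pos_of_mul_pos_right (hb.trans_le h) hr
  exact ⟨ha, (div_le_iff₀ ha).2 h⟩

end LinearFractional

theorem stmt_5_general {K : Type*} [Field K] [LinearOrder K] [IsStrictOrderedRing K]
    {r β γ c : K} (hr : 0 ≤ r) (hβ : -1 < β) (hγ : 0 < γ) (hc₀ : 0 ≤ c)
    (hc : c ≤ (r * (1 - β) - (1 + β)) / (γ * (1 + 2 * r + γ))) :
    0 ≤ 1 - β - c * γ ∧
    0 < 1 - β - 2 * c * γ ∧
    (1 + β + c * (γ + γ ^ 2)) / (1 - β - 2 * c * γ) ≤ r := by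
  have hdenom : γ * (1 + 2 * r + γ) = γ + γ ^ 2 + r * (2 * γ) := by ring
  have hcoeff : 2 * c * γ = c * (2 * γ) := by ring
  rw [hdenom, le_sub_div_add_mul_iff (by positivity), ← hcoeff] at hc
  have hnum : 0 < 1 + β + c * (γ + γ ^ 2) :=
    add_pos_of_pos_of_nonneg (neg_lt_iff_pos_add'.1 hβ) (by positivity)
  obtain ⟨hpos, hdiv⟩ := pos_and_div_le_of_le_mul hr hnum hc
  have hcγ : 0 ≤ c * γ := mul_nonneg hc₀ hγ.le
  exact ⟨by linarith, hpos, hdiv⟩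

theorem stmt_5 (α r β γ c : ℝ)
    (hα0 : 0 < α) (hα13 : α < 1/3)
    (hr : (1 + α) ^ 2 / (1 - 3 * α) < r)
    (hβ0 : 0 ≤ β) (hβγ : β ≤ γ) (hγα : γ ≤ α) (hγ0 : 0 < γ)
    (hc1 : 1 ≤ c)
    (hc2 : c ≤ min ((1 - β) / γ) ((r * (1 - β) - (1 + β)) / (γ * (1 + 2 * r + γ)))) :
    0 ≤ 1 - β - c * γ ∧
    0 < 1 - β - 2 * c * γ ∧
    (1 + β + c * (γ + γ ^ 2)) / (1 - β - 2 * c * γ) ≤ r := by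
  have hr0 : 0 ≤ r := (div_nonneg (sq_nonneg (1 + α)) (by linarith)).trans hr.le
  exact stmt_5_general hr0 (by linarith) hγ0 (by linarith) (hc2.trans (min_le_right _ _))
end

section
/- (Polynomially growing weights have bounded tail ratio.) Let q ≥ 0 be a real number and let (w_t)_{t ≥ 1} be a sequence of positive real numbers such that w_{t+1}/w_t ≤ ((t+1)/t)^q for all t ≥ 1. Then for every integer T ≥ 1: w_T / (Σ_{t=1}^T w_t) ≤ (q + 1)/T. -/
/-!
The increments of `t * w t` are at most `(q + 1) * w (t + 1)`; summing them bounds `T * w T`.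
For `t ≥ 1` this increment bound reads `(1 - q / t) * w (t + 1) ≤ w t`, and it follows from
`w (t + 1) ≤ (1 + 1 / t) ^ q * w t ≤ exp (q / t) * w t` because `1 - q / t ≤ exp (-(q / t))`.
-/

lemma sub_le_sum_Icc_of_succ_sub_le {M : Type*} [AddCommGroup M] [PartialOrder M]
    [IsOrderedAddMonoid M] {u v : ℕ → M} {T : ℕ}
    (h : ∀ t < T, u (t + 1) - u t ≤ v (t + 1)) :
    u T - u 0 ≤ ∑ t ∈ Finset.Icc 1 T, v t :=
  calc u T - u 0 = ∑ t ∈ Finset.range T, (u (t + 1) - u t) := (Finset.sum_range_sub u T).symm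
    _ ≤ ∑ t ∈ Finset.range T, v (t + 1) :=
      Finset.sum_le_sum fun t ht => h t (Finset.mem_range.1 ht)
    _ = ∑ t ∈ Finset.Icc 1 T, v t := by
      rw [Finset.range_eq_Ico, Finset.sum_Ico_add' v 0 T 1, zero_add,
        Finset.Ico_add_one_right_eq_Icc]

lemma one_add_rpow_le_exp_mul {x q : ℝ} (hx : -1 ≤ x) (hq : 0 ≤ q) :
    (1 + x) ^ q ≤ Real.exp (q * x) :=
  calc (1 + x) ^ q ≤ Real.exp x ^ q :=
        Real.rpow_le_rpow (by linarith) (by linarith [Real.add_one_le_exp x]) hq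
    _ = Real.exp (q * x) := by rw [← Real.exp_mul, mul_comm]

lemma one_sub_mul_le_of_le_exp_mul {x a b : ℝ} (hb : 0 ≤ b) (h : b ≤ Real.exp x * a) :
    (1 - x) * b ≤ a :=
  calc (1 - x) * b ≤ Real.exp (-x) * b :=
        mul_le_mul_of_nonneg_right (Real.one_sub_le_exp_neg x) hb
    _ ≤ Real.exp (-x) * (Real.exp x * a) := mul_le_mul_of_nonneg_left h (Real.exp_pos _).le
    _ = a := by rw [← mul_assoc, ← Real.exp_add, neg_add_cancel, Real.exp_zero, one_mul]

lemma mul_le_mul_sum_Icc_of_succ_le_exp_mul {q : ℝ} (hq : 0 ≤ q) {w : ℕ → ℝ} {T : ℕ}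
    (hw : ∀ t < T, 0 ≤ w (t + 1))
    (hgrowth : ∀ t, 1 ≤ t → t < T → w (t + 1) ≤ Real.exp (q / t) * w t) :
    T * w T ≤ (q + 1) * ∑ t ∈ Finset.Icc 1 T, w t := by
  have increment_le (t : ℕ) (htT : t < T) :
      ((t + 1 : ℕ) : ℝ) * w (t + 1) - t * w t ≤ (q + 1) * w (t + 1) := by
    suffices ((t : ℝ) - q) * w (t + 1) ≤ t * w t by push_cast; linarith
    rcases t.eq_zero_or_pos with rfl | ht
    · simpa using mul_nonneg hq (hw 0 htT)
    · have ht₀ : (0 : ℝ) < t := Nat.cast_pos.2 ht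
      calc ((t : ℝ) - q) * w (t + 1) = t * ((1 - q / t) * w (t + 1)) := by field_simp
        _ ≤ t * w t := mul_le_mul_of_nonneg_left
          (one_sub_mul_le_of_le_exp_mul (hw t htT) (hgrowth t ht htT)) ht₀.le
  simpa [Finset.mul_sum] using
    sub_le_sum_Icc_of_succ_sub_le (u := fun t => t * w t) (v := fun t => (q + 1) * w t) increment_le

theorem stmt_9 (q : ℝ) (hq : 0 ≤ q) (w : ℕ → ℝ)
    (hwpos : ∀ t : ℕ, 1 ≤ t → 0 < w t)
    (hwratio : ∀ t : ℕ, 1 ≤ t → w (t + 1) / w t ≤ (((t : ℝ) + 1) / (t : ℝ)) ^ q) :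
    ∀ T : ℕ, 1 ≤ T → w T / (∑ t ∈ Finset.Icc 1 T, w t) ≤ (q + 1) / (T : ℝ) := by
  intro T hT
  have growth_le (t : ℕ) (ht : 1 ≤ t) : w (t + 1) ≤ Real.exp (q / t) * w t := by
    have ht₀ : (0 : ℝ) < t := Nat.cast_pos.2 ht
    rw [← div_le_iff₀ (hwpos t ht)]
    calc w (t + 1) / w t ≤ (((t : ℝ) + 1) / t) ^ q := hwratio t ht
      _ = (1 + (t : ℝ)⁻¹) ^ q := by rw [add_div, div_self ht₀.ne', one_div]
      _ ≤ Real.exp (q / t) :=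
        one_add_rpow_le_exp_mul (by linarith [inv_pos.2 ht₀]) hq
  have sum_pos : 0 < ∑ t ∈ Finset.Icc 1 T, w t :=
    Finset.sum_pos (fun t ht => hwpos t (Finset.mem_Icc.1 ht).1) (Finset.nonempty_Icc.2 hT)
  rw [div_le_div_iff₀ sum_pos (Nat.cast_pos.2 hT), mul_comm (w T)]
  exact mul_le_mul_sum_Icc_of_succ_le_exp_mul hq (fun t _ => (hwpos (t + 1) t.succ_pos).le)
    fun t ht _ => growth_le t ht
end

section
/- (Weighted telescoping bound with relaxation parameters.) Let Ω ≥ 0, let A_0, A_1, …, A_T be real numbers with 0 ≤ A_t ≤ Ω for all 0 ≤ t ≤ T, let 0 < ρ_0 ≤ ρ_1 ≤ … ≤ ρ_{T−1} be positive reals, and let 0 = w_0 ≤ w_1 ≤ … ≤ w_T be nonnegative reals. Then Σ_{t=1}^T (w_t/ρ_{t−1})(A_{t−1} − A_t) ≤ Ω·w_T/ρ_0. -/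
/-!
Summation by parts turns the sum into `∑ (c (t + 1) - c t) * A t` up to boundary terms, where
`c t = w t / ρ (t - 1)`. As `ρ` increases, each increment of `c` is at most the corresponding
increment of `w / ρ 0`; the latter is nonnegative, so replacing `A t` by its upper bound `Ω`
leaves a sum that telescopes to `Ω * w T / ρ 0`.
-/

theorem sum_range_mul_sub_succ {R : Type*} [Ring R] (c A : ℕ → R) (n : ℕ) :
    ∑ t ∈ Finset.range n, c (t + 1) * (A t - A (t + 1)) =
      ∑ t ∈ Finset.range n, (c (t + 1) - c t) * A t + c 0 * A 0 - c n * A n := by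
  have h_term (t : ℕ) : c (t + 1) * (A t - A (t + 1)) =
      (c (t + 1) - c t) * A t - (c (t + 1) * A (t + 1) - c t * A t) := by noncomm_ring
  simp only [h_term, Finset.sum_sub_distrib, Finset.sum_range_sub fun t ↦ c t * A t]
  abel

theorem sum_range_mul_sub_succ_le_of_sub_le_sub {R : Type*} [Ring R] [PartialOrder R]
    [IsOrderedRing R] {c d A : ℕ → R} {Ω : R} {n : ℕ}
    (hA : ∀ t ≤ n, A t ∈ Set.Icc 0 Ω) (hc : 0 ≤ c n) (hd₀ : 0 ≤ d 0) (hcd₀ : c 0 ≤ d 0)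
    (hd : ∀ t < n, d t ≤ d (t + 1))
    (hcd : ∀ t < n, c (t + 1) - c t ≤ d (t + 1) - d t) :
    ∑ t ∈ Finset.range n, c (t + 1) * (A t - A (t + 1)) ≤ d n * Ω := by
  have h_incr (t : ℕ) (ht : t < n) :
      (c (t + 1) - c t) * A t ≤ (d (t + 1) - d t) * Ω :=
    mul_le_mul (hcd t ht) (hA t ht.le).2 (hA t ht.le).1 (sub_nonneg.mpr (hd t ht))
  have h_first : c 0 * A 0 ≤ d 0 * Ω :=
    mul_le_mul hcd₀ (hA 0 n.zero_le).2 (hA 0 n.zero_le).1 hd₀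
  have h_last : 0 ≤ c n * A n := mul_nonneg hc (hA n le_rfl).1
  calc ∑ t ∈ Finset.range n, c (t + 1) * (A t - A (t + 1))
      = ∑ t ∈ Finset.range n, (c (t + 1) - c t) * A t + c 0 * A 0 - c n * A n :=
        sum_range_mul_sub_succ c A n
    _ ≤ ∑ t ∈ Finset.range n, (c (t + 1) - c t) * A t + c 0 * A 0 := sub_le_self _ h_last
    _ ≤ ∑ t ∈ Finset.range n, (d (t + 1) - d t) * Ω + d 0 * Ω :=
        add_le_add (Finset.sum_le_sum fun t ht ↦ h_incr t (Finset.mem_range.mp ht)) h_first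
    _ = d n * Ω := by rw [← Finset.sum_mul, Finset.sum_range_sub, ← add_mul, sub_add_cancel]

section LinearOrderedField

variable {K : Type*} [Field K] [LinearOrder K] [IsStrictOrderedRing K]

theorem div_sub_div_le_sub_div {a b p q r : K} (ha : 0 ≤ a) (hab : a ≤ b) (hp : 0 < p)
    (hpq : p ≤ q) (hqr : q ≤ r) : b / r - a / q ≤ (b - a) / p :=
  calc b / r - a / q
      ≤ b / r - a / r :=
        sub_le_sub_left (div_le_div_of_nonneg_left ha (hp.trans_le hpq) hqr) _
    _ = (b - a) / r := (sub_div b a r).symm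
    _ ≤ (b - a) / p := div_le_div_of_nonneg_left (sub_nonneg.mpr hab) hp (hpq.trans hqr)

theorem stmt_12_general {T : ℕ} {Ω : K} {A ρ w : ℕ → K}
    (hA : ∀ t ≤ T, A t ∈ Set.Icc 0 Ω) (hρ₀ : 0 < ρ 0) (hρ : MonotoneOn ρ (Set.Iio T))
    (hw₀ : 0 ≤ w 0) (hw : MonotoneOn w (Set.Iic T)) :
    ∑ t ∈ Finset.range T, w (t + 1) / ρ t * (A t - A (t + 1)) ≤ Ω * w T / ρ 0 := by
  have hw_nonneg (t : ℕ) (ht : t ≤ T) : 0 ≤ w t :=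
    hw₀.trans (hw T.zero_le ht t.zero_le)
  have hw_succ (t : ℕ) (ht : t < T) : w t ≤ w (t + 1) := hw ht.le ht t.le_succ
  have hρ_ge (t : ℕ) (ht : t < T) : ρ 0 ≤ ρ t :=
    hρ (t.zero_le.trans_lt ht) ht t.zero_le
  have hc_last : 0 ≤ w T / ρ (T - 1) := by
    obtain rfl | hT := T.eq_zero_or_pos
    · exact div_nonneg hw₀ hρ₀.le
    · exact div_nonneg (hw_nonneg T le_rfl) (hρ₀.le.trans (hρ_ge _ (Nat.sub_one_lt_of_lt hT)))
  have h_incr (t : ℕ) (ht : t < T) :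
      w (t + 1) / ρ t - w t / ρ (t - 1) ≤ w (t + 1) / ρ 0 - w t / ρ 0 := by
    have ht_pred : t - 1 < T := (t.sub_le 1).trans_lt ht
    rw [← sub_div]
    exact div_sub_div_le_sub_div (hw_nonneg t ht.le) (hw_succ t ht) hρ₀ (hρ_ge _ ht_pred)
      (hρ ht_pred ht (t.sub_le 1))
  rw [mul_comm Ω, mul_div_right_comm]
  -- Since `0 - 1 = 0` in `ℕ`, the two weight sequences agree at `0`.
  exact sum_range_mul_sub_succ_le_of_sub_le_sub (c := fun t ↦ w t / ρ (t - 1))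
    (d := fun t ↦ w t / ρ 0) hA hc_last (div_nonneg hw₀ hρ₀.le) le_rfl
    (fun t ht ↦ div_le_div_of_nonneg_right (hw_succ t ht) hρ₀.le) h_incr

end LinearOrderedField

theorem stmt_12 (T : ℕ) (hT : 1 ≤ T) (Ω : ℝ) (hΩ : 0 ≤ Ω)
    (A : ℕ → ℝ) (hA : ∀ t : ℕ, t ≤ T → 0 ≤ A t ∧ A t ≤ Ω)
    (ρ : ℕ → ℝ) (hρ0 : 0 < ρ 0)
    (hρmono : ∀ t : ℕ, t + 1 ≤ T - 1 → ρ t ≤ ρ (t + 1))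
    (w : ℕ → ℝ) (hw0 : w 0 = 0)
    (hwmono : ∀ t : ℕ, t < T → w t ≤ w (t + 1)) :
    ∑ t ∈ Finset.Icc 1 T, w t / ρ (t - 1) * (A (t - 1) - A t) ≤ Ω * w T / ρ 0 := by
  rw [← Finset.Ico_add_one_right_eq_Icc, Finset.sum_Ico_eq_sum_range]
  simpa only [Nat.add_sub_cancel, Nat.add_comm 1] using stmt_12_general hA hρ0
    (monotoneOn_of_le_add_one Set.ordConnected_Iio
      fun t _ _ ht ↦ hρmono t (Nat.le_sub_one_of_lt ht))
    hw0.ge (monotoneOn_of_le_add_one Set.ordConnected_Iic fun t _ _ ht ↦ hwmono t ht)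
end

section
/- (Abstract O(1/T) rate from a critical inequality under polynomial averaging.) Let 𝕏 and 𝕐 be real vector spaces, C ⊆ 𝕏 and D ⊆ 𝕐 convex sets, and L : 𝕏 × 𝕐 → ℝ such that x ↦ L(x, y) is convex on C for each y ∈ D and y ↦ L(x, y) is concave on D for each x ∈ C. Let Ω ≥ 0, q ≥ 0, and w_t = t^q for t ≥ 1. Let (x^t, y^t)_{t ≥ 0} be a sequence in C × D such that for every (x, y) ∈ C × D there exists a sequence (A_t)_{t ≥ 0} of reals with 0 ≤ A_t ≤ Ω for all t and L(x^{t+1}, y) − L(x, y^{t+1}) ≤ A_t − A_{t+1} for all t ≥ 0. Then with S_T = Σ_{t=1}^T w_t, x̄^T = (1/S_T) Σ_{t=1}^T w_t x^t and ȳ^T = (1/S_T) Σ_{t=1}^T w_t y^t, for every integer T ≥ 1 and every (x, y) ∈ C × D: L(x̄^T, y) − L(x, ȳ^T) ≤ (q + 1)Ω/T. -/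
/-!
By Jensen's inequality the gap at the averaged points is at most the weighted average of the gaps
along the sequence. Bounding gap `t` by `A (t - 1) - A t` and summing by parts against nondecreasing
weights `w`, the coefficient of each intermediate `A t` is the nonnegative increment
`w (t + 1) - w t`; since `A t ≤ Ω`, the weighted sum of gaps is at most `w T • Ω`.
For `w t = t ^ q`, comparing the sum of the weights with `∫ x in 0..T, x ^ q` gives
`w T / ∑ w ≤ (q + 1) / T`.
-/

open Finset

theorem sum_Icc_smul_le_of_le_sub {R M : Type*} [Ring R] [PartialOrder R]
    [AddCommGroup M] [PartialOrder M] [IsOrderedAddMonoid M] [Module R M] [IsOrderedModule R M]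
    {w : ℕ → R} {g A : ℕ → M} {Ω : M} (hw : Monotone w) (hw₀ : 0 ≤ w 0)
    (hA : ∀ t, A t ≤ Ω) (hg : ∀ t, g (t + 1) ≤ A t - A (t + 1)) (T : ℕ) :
    ∑ t ∈ Icc 1 T, w t • g t ≤ w T • (Ω - A T) := by
  induction T with
  | zero => simpa using smul_nonneg hw₀ (sub_nonneg.2 (hA 0))
  | succ n ih =>
    have hw_succ : 0 ≤ w (n + 1) := hw₀.trans (hw (Nat.zero_le _))
    calc ∑ t ∈ Icc 1 (n + 1), w t • g t
        = ∑ t ∈ Icc 1 n, w t • g t + w (n + 1) • g (n + 1) := sum_Icc_succ_top (by lia) _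
      _ ≤ w n • (Ω - A n) + w (n + 1) • g (n + 1) := by gcongr
      _ ≤ w (n + 1) • (Ω - A n) + w (n + 1) • (A n - A (n + 1)) :=
        add_le_add (smul_le_smul_of_nonneg_right (hw n.le_succ) (sub_nonneg.2 (hA n)))
          (smul_le_smul_of_nonneg_left (hg n) hw_succ)
      _ = w (n + 1) • (Ω - A (n + 1)) := by rw [← smul_add, sub_add_sub_cancel]

section Jensen

variable {𝕜 E F β : Type*} [Field 𝕜] [LinearOrder 𝕜] [IsStrictOrderedRing 𝕜]
  [AddCommGroup E] [Module 𝕜 E] [AddCommGroup F] [Module 𝕜 F]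
  [AddCommGroup β] [PartialOrder β] [IsOrderedAddMonoid β] [Module 𝕜 β] [IsStrictOrderedModule 𝕜 β]
  {C : Set E} {D : Set F} {f : E → β} {g : F → β}

theorem map_centerMass_sub_map_centerMass_le {ι : Type*} {s : Finset ι} {w : ι → 𝕜} {x : ι → E}
    {y : ι → F} (hf : ConvexOn 𝕜 C f) (hg : ConcaveOn 𝕜 D g) (hw : ∀ i ∈ s, 0 ≤ w i)
    (hw_sum : 0 < ∑ i ∈ s, w i) (hx : ∀ i ∈ s, x i ∈ C) (hy : ∀ i ∈ s, y i ∈ D) :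
    f (s.centerMass w x) - g (s.centerMass w y) ≤ s.centerMass w fun i ↦ f (x i) - g (y i) :=
  calc f (s.centerMass w x) - g (s.centerMass w y)
      ≤ s.centerMass w (f ∘ x) - s.centerMass w (g ∘ y) :=
        sub_le_sub (hf.map_centerMass_le hw hw_sum hx) (hg.le_map_centerMass hw hw_sum hy)
    _ = s.centerMass w fun i ↦ f (x i) - g (y i) := by
        simp only [centerMass, Function.comp_apply, smul_sub, sum_sub_distrib]

theorem map_centerMass_sub_map_centerMass_le_of_le_sub {w : ℕ → 𝕜} {x : ℕ → E} {y : ℕ → F}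
    {A : ℕ → β} {Ω : β} {T : ℕ} (hf : ConvexOn 𝕜 C f) (hg : ConcaveOn 𝕜 D g)
    (hw : Monotone w) (hw₀ : 0 ≤ w 0) (hw_sum : 0 < ∑ t ∈ Icc 1 T, w t)
    (hx : ∀ t ∈ Icc 1 T, x t ∈ C) (hy : ∀ t ∈ Icc 1 T, y t ∈ D)
    (hA : ∀ t, A t ≤ Ω) (hA_nonneg : 0 ≤ A T)
    (hgap : ∀ t, f (x (t + 1)) - g (y (t + 1)) ≤ A t - A (t + 1)) :
    f ((Icc 1 T).centerMass w x) - g ((Icc 1 T).centerMass w y) ≤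
      (w T / ∑ t ∈ Icc 1 T, w t) • Ω := by
  have hw_nonneg (t : ℕ) : 0 ≤ w t := hw₀.trans (hw t.zero_le)
  have hsum : ∑ t ∈ Icc 1 T, w t • (f (x t) - g (y t)) ≤ w T • Ω :=
    (sum_Icc_smul_le_of_le_sub hw hw₀ hA hgap T).trans
      (smul_le_smul_of_nonneg_left (sub_le_self Ω hA_nonneg) (hw_nonneg T))
  calc f ((Icc 1 T).centerMass w x) - g ((Icc 1 T).centerMass w y)
      ≤ (Icc 1 T).centerMass w fun t ↦ f (x t) - g (y t) :=
        map_centerMass_sub_map_centerMass_le hf hg (fun t _ ↦ hw_nonneg t) hw_sum hx hy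
    _ ≤ (∑ t ∈ Icc 1 T, w t)⁻¹ • w T • Ω :=
        smul_le_smul_of_nonneg_left hsum (inv_nonneg.2 hw_sum.le)
    _ = (w T / ∑ t ∈ Icc 1 T, w t) • Ω := by rw [smul_smul, inv_mul_eq_div]

end Jensen

section PowerSum

variable {q : ℝ}

theorem monotone_natCast_rpow (hq : 0 ≤ q) : Monotone fun n : ℕ ↦ (n : ℝ) ^ q :=
  fun m _ hmn ↦ Real.rpow_le_rpow m.cast_nonneg (Nat.cast_le.2 hmn) hq

theorem sum_Icc_natCast_rpow_pos {T : ℕ} (hT : 1 ≤ T) : 0 < ∑ t ∈ Icc 1 T, (t : ℝ) ^ q :=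
  sum_pos (fun _ ht ↦ Real.rpow_pos_of_pos (Nat.cast_pos.2 (mem_Icc.1 ht).1) q)
    (nonempty_Icc.2 hT)

theorem natCast_rpow_add_one_div_le_sum_Icc (hq : 0 ≤ q) (T : ℕ) :
    (T : ℝ) ^ (q + 1) / (q + 1) ≤ ∑ t ∈ Icc 1 T, (t : ℝ) ^ q := by
  have hmono : MonotoneOn (fun x : ℝ ↦ x ^ q) (Set.Icc ((0 : ℕ) : ℝ) T) :=
    (Real.monotoneOn_rpow_Ici_of_exponent_nonneg hq).mono
      (by simpa only [Nat.cast_zero] using Set.Icc_subset_Ici_self)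
  calc (T : ℝ) ^ (q + 1) / (q + 1)
      = ∫ x in ((0 : ℕ) : ℝ)..T, x ^ q := by
        rw [integral_rpow (.inl (by linarith)), Nat.cast_zero, Real.zero_rpow (by linarith),
          sub_zero]
    _ ≤ ∑ t ∈ Ico 0 T, ((t + 1 : ℕ) : ℝ) ^ q := hmono.integral_le_sum_Ico T.zero_le
    _ = ∑ t ∈ Icc 1 T, (t : ℝ) ^ q :=
        sum_Ico_add' (fun t : ℕ ↦ (t : ℝ) ^ q) 0 T 1

theorem natCast_rpow_div_sum_Icc_le (hq : 0 ≤ q) {T : ℕ} (hT : 1 ≤ T) :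
    (T : ℝ) ^ q / ∑ t ∈ Icc 1 T, (t : ℝ) ^ q ≤ (q + 1) / T := by
  have hT_pos : (0 : ℝ) < T := Nat.cast_pos.2 hT
  have hsum : (T : ℝ) ^ (q + 1) ≤ (∑ t ∈ Icc 1 T, (t : ℝ) ^ q) * (q + 1) :=
    (div_le_iff₀ (by linarith)).1 (natCast_rpow_add_one_div_le_sum_Icc hq T)
  rw [div_le_div_iff₀ (sum_Icc_natCast_rpow_pos hT) hT_pos, ← Real.rpow_add_one hT_pos.ne']
  linarith

end PowerSum

theorem stmt_14 {X Y : Type*} [AddCommGroup X] [Module ℝ X] [AddCommGroup Y] [Module ℝ Y]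
    (C : Set X) (D : Set Y) (hC : Convex ℝ C) (hD : Convex ℝ D)
    (L : X → Y → ℝ)
    (hconv : ∀ y ∈ D, ConvexOn ℝ C (fun x => L x y))
    (hconc : ∀ x ∈ C, ConcaveOn ℝ D (fun y => L x y))
    (Ω : ℝ) (hΩ : 0 ≤ Ω) (q : ℝ) (hq : 0 ≤ q)
    (xs : ℕ → X) (ys : ℕ → Y)
    (hmem : ∀ t : ℕ, xs t ∈ C ∧ ys t ∈ D)
    (hcrit : ∀ x ∈ C, ∀ y ∈ D, ∃ A : ℕ → ℝ,
      (∀ t : ℕ, 0 ≤ A t ∧ A t ≤ Ω) ∧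
      (∀ t : ℕ, L (xs (t + 1)) y - L x (ys (t + 1)) ≤ A t - A (t + 1))) :
    ∀ T : ℕ, 1 ≤ T → ∀ x ∈ C, ∀ y ∈ D,
      L ((1 / ∑ t ∈ Finset.Icc 1 T, (t : ℝ) ^ q) •
            ∑ t ∈ Finset.Icc 1 T, ((t : ℝ) ^ q) • xs t) y -
          L x ((1 / ∑ t ∈ Finset.Icc 1 T, (t : ℝ) ^ q) •
            ∑ t ∈ Finset.Icc 1 T, ((t : ℝ) ^ q) • ys t) ≤
        (q + 1) * Ω / (T : ℝ) := by
  intro T hT x hx y hy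
  obtain ⟨A, hA, hgap⟩ := hcrit x hx y hy
  have hgap_avg := map_centerMass_sub_map_centerMass_le_of_le_sub (hconv y hy) (hconc x hx)
    (monotone_natCast_rpow hq) (by positivity) (sum_Icc_natCast_rpow_pos hT)
    (fun t _ ↦ (hmem t).1) (fun t _ ↦ (hmem t).2) (fun t ↦ (hA t).2) (hA T).1 hgap
  simp only [Finset.centerMass, ← one_div, smul_eq_mul] at hgap_avg
  calc _ ≤ (T : ℝ) ^ q / (∑ t ∈ Icc 1 T, (t : ℝ) ^ q) * Ω := hgap_avg
    _ ≤ (q + 1) / T * Ω := mul_le_mul_of_nonneg_right (natCast_rpow_div_sum_Icc_le hq hT) hΩ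
    _ = (q + 1) * Ω / T := div_mul_eq_mul_div _ _ _
end
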